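/- Let Φ : X → (ℂⁿ →L[ℂ] H) be a continuous frame for a continuous family of rank-n orthogonal projections P (i.e. Φ*Φ = Id, ΦΦ* = P) on a compact manifold X, and let Φ_δ be any smooth map uniformly close to Φ. Then for Φ_δ sufficiently close in the uniform norm, the matrix G(x) := Φ_δ(x)* P(x) Φ_δ(x) is invertible for all x, and Φ̂(x) := P(x) Φ_δ(x) G(x)^{−1/2} is a smooth frame for P: Φ̂*Φ̂ = Id and Φ̂ Φ̂* = P. -/

import Mathlib

set_option maxHeartbeats 1000000
set_option synthInstance.maxHeartbeats 400000

open ContinuousLinearMap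

/-!
Write `T = Φ* Φδ`. Since `Φ` is isometric, `‖T - 1‖ ≤ ‖Φδ - Φ‖ < 1`, so `T` is invertible, and
`P = Φ Φ*` gives `G = T* T` and `Φ̂ = Φ T (T* T)^{-1/2}`: the unitary polar factor of `T`
followed by `Φ`. Since `G` and `P Φδ` do not involve `Φ`, smoothness of `Φ̂` only requires that of
the square root on strictly positive elements. At a strictly positive `a`, the derivative
`h ↦ a * h + h * a` of `b ↦ b * b` differs from multiplication by `2c` by an operator of norm at
most `2 * ‖c - a‖`. For a scalar `c > ‖c - a‖` it is therefore invertible, and the inverse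
function theorem applies.
-/

open scoped Topology Ring

section InverseFunction

variable {𝕜 E F : Type*} [RCLike 𝕜] [NormedAddCommGroup E] [NormedSpace 𝕜 E] [CompleteSpace E]
  [NormedAddCommGroup F] [NormedSpace 𝕜 F]

theorem contDiffOn_of_rightInvOn {n : WithTop ℕ∞} (hn : n ≠ 0) {f : E → F} {g : F → E} {s : Set F}
    (hf : ∀ b ∈ s, ContDiffAt 𝕜 n f (g b)) (hf' : ∀ b ∈ s, (fderiv 𝕜 f (g b)).IsInvertible)
    (hg : ContinuousOn g s) (hfg : s.RightInvOn g f) : ContDiffOn 𝕜 n g s := by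
  intro b hb
  obtain ⟨f', hf'⟩ := hf' b hb
  have hderiv : HasFDerivAt f (f' : E →L[𝕜] F) (g b) :=
    hf' ▸ ((hf b hb).differentiableAt hn).hasFDerivAt
  have hinv : ContDiffAt 𝕜 n ((hf b hb).localInverse hderiv hn) b := by
    simpa only [hfg hb] using (hf b hb).to_localInverse hderiv hn
  have hleft : ∀ᶠ y in 𝓝 (g b), (hf b hb).localInverse hderiv hn (f y) = y :=
    ((hf b hb).hasStrictFDerivAt' hderiv hn).eventually_left_inverse
  refine hinv.contDiffWithinAt.congr_of_eventuallyEq_of_mem ?_ hb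
  filter_upwards [(hg b hb).eventually hleft, self_mem_nhdsWithin] with y hy hys
  rw [← hy, hfg hys]

end InverseFunction

section Sylvester

theorem isUnit_mul_add_flip_mul_of_norm_sub_lt {A : Type*} [NormedRing A] [NormedAlgebra ℝ A]
    [CompleteSpace A] {a b : A} {c d : ℝ} (ha : ‖algebraMap ℝ A c - a‖ < c)
    (hb : ‖algebraMap ℝ A d - b‖ < d) :
    IsUnit (ContinuousLinearMap.mul ℝ A a + (ContinuousLinearMap.mul ℝ A).flip b) := by
  let N : A →L[ℝ] A := ContinuousLinearMap.mul ℝ A (algebraMap ℝ A c - a) +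
    (ContinuousLinearMap.mul ℝ A).flip (algebraMap ℝ A d - b)
  have hNapply (h : A) :
      N h = (algebraMap ℝ A c - a) * h + h * (algebraMap ℝ A d - b) := rfl
  have hnorm : ‖N‖ ≤ ‖algebraMap ℝ A c - a‖ + ‖algebraMap ℝ A d - b‖ := by
    refine N.opNorm_le_bound (by positivity) fun h => ?_
    calc ‖N h‖ ≤ ‖algebraMap ℝ A c - a‖ * ‖h‖ + ‖h‖ * ‖algebraMap ℝ A d - b‖ :=
          norm_add_le_of_le (norm_mul_le _ _) (norm_mul_le _ _)
      _ = (‖algebraMap ℝ A c - a‖ + ‖algebraMap ℝ A d - b‖) * ‖h‖ := by ring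
  have hresolvent : c + d ∈ resolventSet ℝ N := by
    apply spectrum.mem_resolventSet_of_norm_lt_mul
    calc ‖N‖ * ‖(1 : A →L[ℝ] A)‖ ≤ ‖N‖ := mul_le_of_le_one_right (norm_nonneg _) norm_id_le
      _ < c + d := by linarith
      _ ≤ ‖c + d‖ := le_abs_self _
  convert! spectrum.mem_resolventSet_iff.1 hresolvent using 1
  ext h
  simp [hNapply, Algebra.algebraMap_eq_smul_one, sub_mul, mul_sub, add_smul]
  abel

variable {A : Type*} [CStarAlgebra A] [PartialOrder A] [StarOrderedRing A]

theorem exists_norm_algebraMap_sub_lt {a : A} (ha : IsStrictlyPositive a) :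
    ∃ c : ℝ, ‖algebraMap ℝ A c - a‖ < c := by
  cases subsingleton_or_nontrivial A
  · exact ⟨1, by simp [Subsingleton.elim _ (0 : A)]⟩
  obtain ⟨r, hr, hra⟩ : ∃ r > 0, algebraMap ℝ A r ≤ a :=
    (CFC.exists_pos_algebraMap_le_iff ha.isSelfAdjoint).2 fun _ => ha.spectrum_pos
  have haM : a ≤ algebraMap ℝ A ‖a‖ := IsSelfAdjoint.le_algebraMap_norm_self ha.isSelfAdjoint
  have hr0 : 0 ≤ algebraMap ℝ A r := algebraMap_nonneg A hr.le
  refine ⟨‖a‖ + r, lt_of_le_of_lt ?_ (lt_add_of_pos_right _ hr)⟩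
  rw [map_add, CStarAlgebra.norm_le_iff_le_algebraMap _ (norm_nonneg a)
    (sub_nonneg.2 (haM.trans (le_add_of_nonneg_right hr0)))]
  exact sub_le_iff_le_add.2 (by gcongr)

theorem isUnit_mul_add_flip_mul {a b : A} (ha : IsStrictlyPositive a) (hb : IsStrictlyPositive b) :
    IsUnit (ContinuousLinearMap.mul ℝ A a + (ContinuousLinearMap.mul ℝ A).flip b) := by
  obtain ⟨c, hc⟩ := exists_norm_algebraMap_sub_lt ha
  obtain ⟨d, hd⟩ := exists_norm_algebraMap_sub_lt hb
  exact isUnit_mul_add_flip_mul_of_norm_sub_lt hc hd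

end Sylvester

section InverseSqrt

variable {A : Type*} [CStarAlgebra A] [PartialOrder A] [StarOrderedRing A]

theorem contDiffOn_cfcSqrt {n : WithTop ℕ∞} :
    ContDiffOn ℝ n (CFC.sqrt : A → A) {a | IsStrictlyPositive a} := by
  have hsquare : ContDiff ℝ ⊤ fun b : A => b * b := contDiff_id.mul contDiff_id
  refine ContDiffOn.of_le (contDiffOn_of_rightInvOn (f := fun b : A => b * b) (by simp)
    (fun _ _ => hsquare.contDiffAt) (fun a ha => ?_)
    (CFC.continuousOn_sqrt.mono fun _ ha => ha.nonneg)
    fun a ha => CFC.sqrt_mul_sqrt_self a ha.nonneg) le_top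
  have hroot : IsStrictlyPositive (CFC.sqrt a) := ha.sqrt
  obtain ⟨u, hu⟩ := isUnit_mul_add_flip_mul hroot hroot
  refine ⟨ContinuousLinearEquiv.unitsEquiv ℝ A u, ?_⟩
  have hderiv := (hasFDerivAt_id (𝕜 := ℝ) (CFC.sqrt a)).mul' (hasFDerivAt_id (CFC.sqrt a))
  refine Eq.trans ?_ hderiv.fderiv.symm
  ext h
  exact congr($hu h)

theorem contDiffOn_inverse_cfcSqrt {n : WithTop ℕ∞} :
    ContDiffOn ℝ n (fun a : A => (CFC.sqrt a)⁻¹ʳ) {a | IsStrictlyPositive a} := by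
  intro a ha
  obtain ⟨u, hu⟩ := ha.isUnit_cfcSqrt
  have hinv : ContDiffAt ℝ n Ring.inverse (CFC.sqrt a) := hu ▸ contDiffAt_ringInverse ℝ u
  exact hinv.comp_contDiffWithinAt a (contDiffOn_cfcSqrt a ha)

theorem isStrictlyPositive_star_mul_self {a : A} (ha : IsUnit a) :
    IsStrictlyPositive (star a * a) :=
  (ha.star.mul ha).isStrictlyPositive (star_mul_self_nonneg a)

theorem mul_inverse_cfcSqrt_star_mul_self_mem_unitary {a : A} (ha : IsUnit a) :
    a * (CFC.sqrt (star a * a))⁻¹ʳ ∈ unitary A := by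
  have hpos := isStrictlyPositive_star_mul_self ha
  have hinv : IsStrictlyPositive (CFC.sqrt (star a * a))⁻¹ʳ := hpos.sqrt.ringInverse
  refine (ha.mul hinv.isUnit).mem_unitary_of_star_mul_self ?_
  have hconj : (CFC.sqrt (star a * a))⁻¹ʳ * (star a * a) * (CFC.sqrt (star a * a))⁻¹ʳ = 1 := by
    simpa only [CFC.conjSqrt_apply, CFC.sqrt_ringInverse] using
      CFC.conjSqrt_ringInverse_self (star a * a)
  rw [star_mul, hinv.isSelfAdjoint.star_eq]
  simpa only [mul_assoc] using hconj

end InverseSqrt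

section Adjoint

variable {𝕜 V W : Type*} [RCLike 𝕜] [NormedAddCommGroup V] [InnerProductSpace 𝕜 V]
  [CompleteSpace V] [NormedAddCommGroup W] [InnerProductSpace 𝕜 W] [CompleteSpace W]

theorem norm_le_one_of_adjoint_comp_self_eq_id {S : V →L[𝕜] W}
    (hS : adjoint S ∘L S = .id 𝕜 V) : ‖S‖ ≤ 1 :=
  S.opNorm_le_bound zero_le_one fun v => by
    rw [one_mul, S.norm_map_iff_adjoint_comp_self.2 hS v]

theorem isUnit_adjoint_comp_of_norm_sub_lt_one {S T : V →L[𝕜] W}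
    (hS : adjoint S ∘L S = .id 𝕜 V) (hST : ‖T - S‖ < 1) : IsUnit (adjoint S ∘L T) := by
  have hnorm : ‖adjoint S ∘L (S - T)‖ < 1 :=
    calc ‖adjoint S ∘L (S - T)‖ ≤ ‖adjoint S‖ * ‖S - T‖ := opNorm_comp_le _ _
      _ ≤ ‖S - T‖ := mul_le_of_le_one_left (norm_nonneg _)
          (by simpa using norm_le_one_of_adjoint_comp_self_eq_id hS)
      _ < 1 := by rwa [norm_sub_rev]
  have hsub : adjoint S ∘L T = 1 - adjoint S ∘L (S - T) := by
    rw [comp_sub, hS]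
    exact (sub_sub_self _ _).symm
  exact hsub ▸ isUnit_one_sub_of_norm_lt_one hnorm

end Adjoint

section RealSmoothness

variable {U V W : Type*} {n : WithTop ℕ∞}

theorem contDiff_clm_comp [NormedAddCommGroup U] [NormedSpace ℂ U] [NormedAddCommGroup V]
    [NormedSpace ℂ V] [NormedAddCommGroup W] [NormedSpace ℂ W] :
    ContDiff ℝ n fun p : (V →L[ℂ] W) × (U →L[ℂ] V) => p.1 ∘L p.2 :=
  (isBoundedBilinearMap_comp (𝕜 := ℂ)).contDiff.restrict_scalars ℝ

theorem contDiff_adjoint [NormedAddCommGroup V] [InnerProductSpace ℂ V] [CompleteSpace V]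
    [NormedAddCommGroup W] [InnerProductSpace ℂ W] [CompleteSpace W] :
    ContDiff ℝ n (adjoint : (V →L[ℂ] W) → W →L[ℂ] V) :=
  (((adjoint : (V →L[ℂ] W) ≃ₗᵢ⋆[ℂ] W →L[ℂ] V) : (V →L[ℂ] W) →+ W →L[ℂ] V).toRealLinearMap
    adjoint.continuous).contDiff

end RealSmoothness

section Frames

variable {F H : Type*} [NormedAddCommGroup F] [InnerProductSpace ℂ F] [CompleteSpace F]
  [NormedAddCommGroup H] [InnerProductSpace ℂ H] [CompleteSpace H]

/-- `V` is an orthonormal frame for the orthogonal projection `P`, i.e. `V* V = 1` and `V V* = P`;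
that `P` is an orthogonal projection is a consequence, not a field. -/
structure IsOrthonormalFrame (V : F →L[ℂ] H) (P : H →L[ℂ] H) : Prop where
  adjoint_comp_self : adjoint V ∘L V = .id ℂ F
  comp_adjoint_self : V ∘L adjoint V = P

/-- The Gram operator `T* P T` of the projection of `T` to the range of `P`; for `T = Φδ(x)` it is
the matrix `G(x)`. -/
noncomputable def compressedGram (P : H →L[ℂ] H) (T : F →L[ℂ] H) : F →L[ℂ] F :=
  adjoint T ∘L P ∘L T

/-- The symmetric (Löwdin) orthonormalization `P T (T* P T)^{-1/2}` of the projection of `T` to the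
range of `P`; for `T = Φδ(x)` it is `Φ̂(x)`. It takes the value `0` where `T* P T` is not
strictly positive. -/
noncomputable def symmetricOrthonormalization (P : H →L[ℂ] H) (T : F →L[ℂ] H) : F →L[ℂ] H :=
  (P ∘L T) ∘L (CFC.sqrt (compressedGram P T))⁻¹ʳ

namespace IsOrthonormalFrame

variable {V T : F →L[ℂ] H} {P : H →L[ℂ] H}

theorem comp_unitary (hV : IsOrthonormalFrame V P) {u : F →L[ℂ] F}
    (hu : u ∈ unitary (F →L[ℂ] F)) : IsOrthonormalFrame (V ∘L u) P where
  adjoint_comp_self := calc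
    adjoint (V ∘L u) ∘L V ∘L u = star u ∘L (adjoint V ∘L V) ∘L u := by rw [adjoint_comp]; rfl
    _ = .id ℂ F := by rw [hV.adjoint_comp_self]; exact Unitary.star_mul_self_of_mem hu
  comp_adjoint_self := calc
    (V ∘L u) ∘L adjoint (V ∘L u) = V ∘L (u * star u) ∘L adjoint V := by rw [adjoint_comp]; rfl
    _ = P := by rw [Unitary.mul_star_self_of_mem hu]; exact hV.comp_adjoint_self

theorem compressedGram_eq (hV : IsOrthonormalFrame V P) (T : F →L[ℂ] H) :
    compressedGram P T = star (adjoint V ∘L T) * (adjoint V ∘L T) := by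
  rw [star_eq_adjoint, adjoint_comp, adjoint_adjoint, compressedGram, ← hV.comp_adjoint_self]
  rfl

theorem symmetricOrthonormalization_eq (hV : IsOrthonormalFrame V P) (T : F →L[ℂ] H) :
    symmetricOrthonormalization P T = V ∘L ((adjoint V ∘L T) *
      (CFC.sqrt (star (adjoint V ∘L T) * (adjoint V ∘L T)))⁻¹ʳ) := by
  rw [symmetricOrthonormalization, hV.compressedGram_eq, ← hV.comp_adjoint_self]
  rfl

theorem isStrictlyPositive_compressedGram (hV : IsOrthonormalFrame V P) (hT : ‖T - V‖ < 1) :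
    IsStrictlyPositive (compressedGram P T) :=
  hV.compressedGram_eq T ▸ isStrictlyPositive_star_mul_self
    (isUnit_adjoint_comp_of_norm_sub_lt_one hV.adjoint_comp_self hT)

theorem symmetricOrthonormalization (hV : IsOrthonormalFrame V P) (hT : ‖T - V‖ < 1) :
    IsOrthonormalFrame (symmetricOrthonormalization P T) P :=
  hV.symmetricOrthonormalization_eq T ▸ hV.comp_unitary
    (mul_inverse_cfcSqrt_star_mul_self_mem_unitary
      (isUnit_adjoint_comp_of_norm_sub_lt_one hV.adjoint_comp_self hT))

end IsOrthonormalFrame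

variable {E : Type*} [NormedAddCommGroup E] [NormedSpace ℝ E] {s : Set E} {n : WithTop ℕ∞}
  {P : E → H →L[ℂ] H} {T : E → F →L[ℂ] H}

theorem contDiffOn_compressedGram (hP : ContDiffOn ℝ n P s) (hT : ContDiffOn ℝ n T s) :
    ContDiffOn ℝ n (fun x => compressedGram (P x) (T x)) s :=
  contDiff_clm_comp.comp_contDiffOn <| (contDiff_adjoint.comp_contDiffOn hT).prodMk <|
    contDiff_clm_comp.comp_contDiffOn (hP.prodMk hT)

theorem contDiffOn_symmetricOrthonormalization (hP : ContDiffOn ℝ n P s) (hT : ContDiffOn ℝ n T s)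
    (hpos : ∀ x ∈ s, IsStrictlyPositive (compressedGram (P x) (T x))) :
    ContDiffOn ℝ n (fun x => symmetricOrthonormalization (P x) (T x)) s :=
  contDiff_clm_comp.comp_contDiffOn <|
    (contDiff_clm_comp.comp_contDiffOn (hP.prodMk hT)).prodMk <|
      contDiffOn_inverse_cfcSqrt.comp (contDiffOn_compressedGram hP hT) hpos

theorem smoothing_a_continuous_frame_general {Φ : E → F →L[ℂ] H} (hP : ContDiffOn ℝ n P s)
    (hΦ : ∀ x ∈ s, IsOrthonormalFrame (Φ x) (P x)) (hT : ContDiffOn ℝ n T s)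
    (hclose : ∀ x ∈ s, ‖T x - Φ x‖ < 1) :
    (∀ x ∈ s, IsUnit (compressedGram (P x) (T x))) ∧
      ContDiffOn ℝ n (fun x => symmetricOrthonormalization (P x) (T x)) s ∧
      ∀ x ∈ s, IsOrthonormalFrame (symmetricOrthonormalization (P x) (T x)) (P x) := by
  have hpos (x) (hx : x ∈ s) : IsStrictlyPositive (compressedGram (P x) (T x)) :=
    (hΦ x hx).isStrictlyPositive_compressedGram (hclose x hx)
  exact ⟨fun x hx => (hpos x hx).isUnit, contDiffOn_symmetricOrthonormalization hP hT hpos,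
    fun x hx => (hΦ x hx).symmetricOrthonormalization (hclose x hx)⟩

end Frames

/-- Let `Φ` be a continuous frame for a smooth family of rank-`n`
orthogonal projections `P` on a compact set `K`. Then for any smooth `Φδ` sufficiently
uniformly close to `Φ` on `K`, the matrix `G(x) = Φδ(x)* P(x) Φδ(x)` is invertible on `K`
and `Φ̂(x) = P(x) Φδ(x) G(x)^{−1/2}` is a smooth frame for `P`:
`Φ̂*Φ̂ = 1` and `Φ̂Φ̂* = P`. -/
theorem smoothing_a_continuous_frame
    {E : Type*} [NormedAddCommGroup E] [NormedSpace ℝ E]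
    {H : Type*} [NormedAddCommGroup H] [InnerProductSpace ℂ H] [FiniteDimensional ℂ H]
    {n : ℕ} (K : Set E) (hK : IsCompact K)
    (P : E → (H →L[ℂ] H)) (hP : ContDiff ℝ (⊤ : ℕ∞) P)
    (hproj : ∀ x, (P x) ∘L (P x) = P x)
    (hsa : ∀ x, ContinuousLinearMap.adjoint (P x) = P x)
    (Φ : E → (EuclideanSpace ℂ (Fin n) →L[ℂ] H)) (hΦ : Continuous Φ)
    (hΦiso : ∀ x, (ContinuousLinearMap.adjoint (Φ x)) ∘L Φ x = ContinuousLinearMap.id ℂ _)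
    (hΦP : ∀ x, Φ x ∘L (ContinuousLinearMap.adjoint (Φ x)) = P x) :
    ∃ ε > (0:ℝ), ∀ Φδ : E → (EuclideanSpace ℂ (Fin n) →L[ℂ] H),
      ContDiff ℝ (⊤ : ℕ∞) Φδ → (∀ x ∈ K, ‖Φδ x - Φ x‖ ≤ ε) →
      (∀ x ∈ K, IsUnit
          ((ContinuousLinearMap.adjoint (Φδ x)) ∘L (P x) ∘L Φδ x)) ∧
      ContDiffOn ℝ (⊤ : ℕ∞)
        (fun x => ((P x) ∘L Φδ x) ∘L
          Ring.inverse (CFC.sqrt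
            ((ContinuousLinearMap.adjoint (Φδ x)) ∘L (P x) ∘L Φδ x))) K ∧
      (∀ x ∈ K,
        (ContinuousLinearMap.adjoint (((P x) ∘L Φδ x) ∘L
            Ring.inverse (CFC.sqrt
              ((ContinuousLinearMap.adjoint (Φδ x)) ∘L (P x) ∘L Φδ x)))) ∘L
          (((P x) ∘L Φδ x) ∘L
            Ring.inverse (CFC.sqrt
              ((ContinuousLinearMap.adjoint (Φδ x)) ∘L (P x) ∘L Φδ x)))
          = ContinuousLinearMap.id ℂ _) ∧
      (∀ x ∈ K,
        (((P x) ∘L Φδ x) ∘L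
            Ring.inverse (CFC.sqrt
              ((ContinuousLinearMap.adjoint (Φδ x)) ∘L (P x) ∘L Φδ x))) ∘L
          (ContinuousLinearMap.adjoint (((P x) ∘L Φδ x) ∘L
            Ring.inverse (CFC.sqrt
              ((ContinuousLinearMap.adjoint (Φδ x)) ∘L (P x) ∘L Φδ x))))
          = P x) := by
  refine ⟨1 / 2, by norm_num, fun Φδ hΦδ hclose => ?_⟩
  obtain ⟨hunit, hsmooth, hframe⟩ := smoothing_a_continuous_frame_general hP.contDiffOn
    (fun x _ => ⟨hΦiso x, hΦP x⟩) hΦδ.contDiffOn fun x hx => (hclose x hx).trans_lt one_half_lt_one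
  exact ⟨hunit, hsmooth, fun x hx => (hframe x hx).adjoint_comp_self,
    fun x hx => (hframe x hx).comp_adjoint_self⟩
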